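/- Let w ∈ I(S_n) be an involution with connected components C_1, …, C_k. Then the principal order ideal B(w) in the Bruhat order on involutions is isomorphic as a poset to the direct product B(w_{C_1}) × ⋯ × B(w_{C_k}). -/

import Mathlib

/-!
The Bruhat order is the reflexive transitive closure of the relation `u → u * (i j)` with `i < j`
and `u i < u j` (`bruhatLE_iff`), because such a multiplication strictly increases the number of
inversions (`invCount_lt_mul_swap`).

Label every position by its connected component, via `c : Fin n → Fin k`. A permutation
*respects* `c` if it preserves the labels and never inverts two positions with different labels.
The involution `w` respects `c`, by definition of the components and since `a` and `w a` are always
connected. If `v = u * (i j)` is such a step, then `(i, j)` is an inversion of `v`; so if `v`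
respects `c` then `c i = c j`, and `u` respects `c` as well. Hence everything below `w` respects `c`,
and every chain below `w` uses only transpositions inside components (`Respects.chain`).

Restricting such a chain to a component yields a chain between the restrictions
(`Respects.restrict_le`). Conversely, `wr i` respects the finer labelling in which positions outside
`C i` are pairwise distinguished, so a chain below `wr i` uses only transpositions inside `C i`, and
chains for the various components can be performed one component after the other
(`le_of_component_chains`). So restriction to the components is the desired isomorphism.
-/

/-- The number of inversions of a permutation. -/
def invCount {n : ℕ} (π : Equiv.Perm (Fin n)) : ℕ :=
  (Finset.univ.filter fun p : Fin n × Fin n => p.1 < p.2 ∧ π p.2 < π p.1).card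

/-- `w` is an involution: an element of order at most two. -/
def IsInvolution {n : ℕ} (w : Equiv.Perm (Fin n)) : Prop := w * w = 1

/-- A transposition in the symmetric group. -/
def IsTransposition {n : ℕ} (t : Equiv.Perm (Fin n)) : Prop :=
  ∃ i j : Fin n, i ≠ j ∧ t = Equiv.swap i j

/-- The Bruhat order on the symmetric group: `u ≤ w` iff `w = u * t₁ * ⋯ * tₘ` for
transpositions `t₁, …, tₘ` such that the number of inversions strictly increases
along the partial products `u * t₁ * ⋯ * tᵢ`. -/
def BruhatLE {n : ℕ} (u w : Equiv.Perm (Fin n)) : Prop :=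
  ∃ ts : List (Equiv.Perm (Fin n)),
    (∀ t ∈ ts, IsTransposition t) ∧
    w = ts.foldl (· * ·) u ∧
    ∀ k, k + 1 ≤ ts.length →
      invCount ((ts.take k).foldl (· * ·) u) < invCount ((ts.take (k + 1)).foldl (· * ·) u)

/-- An involution `w` is Boolean if the principal order ideal
`B(w) = {u ∈ I(Sₙ) : u ≤ w}` of the Bruhat order on involutions is isomorphic,
as a poset, to the Boolean lattice of all subsets of some finite set. -/
def IsBooleanInvolution {n : ℕ} (w : Equiv.Perm (Fin n)) : Prop :=
  ∃ (m : ℕ) (f : {u : Equiv.Perm (Fin n) // IsInvolution u ∧ BruhatLE u w} ≃ Finset (Fin m)),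
    ∀ a b, BruhatLE a.1 b.1 ↔ f a ⊆ f b

/-- One step of the connectedness relation: positions `a` and `b` satisfy
`sgn(a - b) = -sgn(w a - w b)`. -/
def CrossStep {n : ℕ} (w : Equiv.Perm (Fin n)) (a b : Fin n) : Prop :=
  Int.sign ((a : ℕ) - (b : ℕ) : ℤ) = - Int.sign ((w a : ℕ) - (w b : ℕ) : ℤ)

/-- Positions `i` and `j` are connected in `w` if there is a sequence
`i = i₀, i₁, …, i_k = j` with `sgn(i_{l-1} - i_l) = -sgn(w i_{l-1} - w i_l)`
for all `l ∈ [k]`. -/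
def Connected {n : ℕ} (w : Equiv.Perm (Fin n)) : Fin n → Fin n → Prop :=
  Relation.ReflTransGen (CrossStep w)

/-! ### Bruhat order and upward steps -/

open Relation

/-- One upward step of the Bruhat order: right multiplication by a transposition `(i j)`, `i < j`,
whose positions are not inverted by `u` and have the same label under `c`. A constant `c`
imposes no condition on labels. -/
def BruhatStep {n : ℕ} {α : Type*} (c : Fin n → α) (u v : Equiv.Perm (Fin n)) : Prop :=
  ∃ i j : Fin n, i < j ∧ c i = c j ∧ u i < u j ∧ v = u * Equiv.swap i j

/-- `u` preserves the labels `c`, and does not invert any two positions with different labels. -/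
def Respects {n : ℕ} {α : Type*} (c : Fin n → α) (u : Equiv.Perm (Fin n)) : Prop :=
  (∀ a, c (u a) = c a) ∧ ∀ a b, a < b → c a ≠ c b → u a < u b

/-- The inversions of `u` inject into the inversions of `u * (i j)` other than `(i, j)`: apply
`(i j)` to both positions if this keeps them in increasing order, and otherwise leave them. -/
lemma invCount_lt_mul_swap {n : ℕ} (u : Equiv.Perm (Fin n)) {i j : Fin n} (hij : i < j)
    (hu : u i < u j) : invCount u < invCount (u * Equiv.swap i j) := by
  classical
  unfold invCount
  set t := Equiv.swap i j with ht
  have htt : ∀ a, t (t a) = a := fun a => Equiv.swap_apply_self i j a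
  have hti : t i = j := Equiv.swap_apply_left i j
  have htj : t j = i := Equiv.swap_apply_right i j
  have hto : ∀ a, a ≠ i → a ≠ j → t a = a := fun a => Equiv.swap_apply_of_ne_of_ne
  set S := Finset.univ.filter fun p : Fin n × Fin n => p.1 < p.2 ∧ (u * t) p.2 < (u * t) p.1
    with hS
  have hSm : ∀ a b, (a, b) ∈ S ↔ a < b ∧ u (t b) < u (t a) := fun a b => by
    rw [hS, Finset.mem_filter]
    simp
  have hmem : (i, j) ∈ S := by rw [hSm, hti, htj]; exact ⟨hij, hu⟩
  refine lt_of_le_of_lt ?_ (Finset.card_lt_card (Finset.erase_ssubset hmem))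
  refine Finset.card_le_card_of_injOn
    (fun p => if t p.1 < t p.2 then (t p.1, t p.2) else p) ?_ ?_
  · rintro ⟨a, b⟩ hp
    obtain ⟨hab, hinv⟩ : a < b ∧ u b < u a := by simpa using hp
    by_cases h : t a < t b
    · have hne : (t a, t b) ≠ (i, j) := by
        intro he
        rw [Prod.mk.injEq] at he
        have h1 : a = j := by rw [← htt a, he.1, hti]
        have h2 : b = i := by rw [← htt b, he.2, htj]
        subst h1 h2
        exact absurd hab (not_lt.2 hij.le)
      simpa [h, hSm, htt, hinv] using hne
    · have hne : (a, b) ≠ (i, j) := by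
        intro he
        rw [Prod.mk.injEq] at he
        obtain ⟨rfl, rfl⟩ := he
        exact absurd hinv (not_lt.2 hu.le)
      have key : u (t b) < u (t a) := by
        by_cases ha : a = i
        · subst ha
          have hbj : b ≠ j := fun hb => hne (by rw [hb])
          rw [hti, hto b hab.ne' hbj]
          exact hinv.trans hu
        · by_cases hb : b = j
          · subst hb
            rw [htj, hto a ha hab.ne]
            exact hu.trans hinv
          · by_cases haj : a = j
            · subst haj
              exact absurd ((htj ▸ (hto b (hij.trans hab).ne' hb).symm ▸ hij.trans hab : t a < t b)) h
            · by_cases hbi : b = i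
              · subst hbi
                exact absurd ((hti ▸ (hto a ha haj).symm ▸ hab.trans hij : t a < t b)) h
              · rw [hto a ha haj, hto b hbi hb] at h
                exact absurd hab h
      simpa [h, hSm, hab, key] using hne
  · rintro ⟨a, b⟩ hp ⟨a', b'⟩ hp' he
    have hab : a < b := by
      have : a < b ∧ u b < u a := by simpa using hp
      exact this.1
    have hab' : a' < b' := by
      have : a' < b' ∧ u b' < u a' := by simpa using hp'
      exact this.1
    dsimp only at he
    split_ifs at he with h h'
    · simpa using he
    · rw [Prod.mk.injEq] at he
      obtain ⟨rfl, rfl⟩ := he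
      rw [htt, htt] at h'
      exact absurd hab h'
    · rw [Prod.mk.injEq] at he
      obtain ⟨rfl, rfl⟩ := he
      rw [htt, htt] at h
      exact absurd hab' h
    · exact he

lemma bruhatStep_of_invCount_lt {n : ℕ} {u t : Equiv.Perm (Fin n)} (ht : IsTransposition t)
    (h : invCount u < invCount (u * t)) : BruhatStep (fun _ => ()) u (u * t) := by
  have main : ∀ i j : Fin n, i < j → t = Equiv.swap i j →
      BruhatStep (fun _ => ()) u (u * t) := by
    rintro i j hij rfl
    refine ⟨i, j, hij, rfl, ?_, rfl⟩
    by_contra hlt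
    have hlt' : u j < u i :=
      lt_of_le_of_ne (not_lt.1 hlt) fun he => hij.ne' (u.injective he)
    have := invCount_lt_mul_swap (u * Equiv.swap i j) hij (by simpa using hlt')
    rw [mul_assoc, Equiv.swap_mul_self, mul_one] at this
    exact absurd h this.asymm
  obtain ⟨i, j, hij, rfl⟩ := ht
  rcases lt_or_gt_of_ne hij with h' | h'
  · exact main i j h' rfl
  · exact main j i h' (Equiv.swap_comm i j)

lemma bruhatLE_iff {n : ℕ} {u w : Equiv.Perm (Fin n)} :
    BruhatLE u w ↔ ReflTransGen (BruhatStep fun _ => ()) u w := by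
  constructor
  · rintro ⟨ts, hts, rfl, hinc⟩
    induction ts generalizing u with
    | nil => exact .refl
    | cons t ts ih =>
      refine .head (b := u * t) (bruhatStep_of_invCount_lt (hts t (by simp)) ?_) ?_
      · simpa using hinc 0 (by simp)
      · refine ih (fun s hs => hts s (by simp [hs])) fun k hk => ?_
        simpa using hinc (k + 1) (by simpa using hk)
  · intro h
    induction h using ReflTransGen.head_induction_on with
    | refl => exact ⟨[], by simp, by simp, by simp⟩
    | head hstep _ ih =>
      obtain ⟨i, j, hij, -, hlt, rfl⟩ := hstep
      obtain ⟨ts, hts, hw, hinc⟩ := ih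
      refine ⟨Equiv.swap i j :: ts, ?_, by simpa using hw, ?_⟩
      · intro t ht
        rcases List.mem_cons.1 ht with rfl | ht
        · exact ⟨i, j, hij.ne, rfl⟩
        · exact hts t ht
      · rintro (_ | k) hk
        · simpa using invCount_lt_mul_swap _ hij hlt
        · simpa using hinc k (by simpa using hk)

lemma BruhatStep.forget {n : ℕ} {α : Type*} {c : Fin n → α} {u v : Equiv.Perm (Fin n)}
    (h : BruhatStep c u v) : BruhatStep (fun _ => ()) u v := by
  obtain ⟨i, j, hij, -, hu, rfl⟩ := h
  exact ⟨i, j, hij, rfl, hu, rfl⟩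

/-! ### Permutations respecting a labelling -/

/-- An upward step ending at a permutation which respects `c` creates an inversion, hence
exchanges two positions with the same label. -/
lemma Respects.step {n : ℕ} {α : Type*} {c : Fin n → α} {u v : Equiv.Perm (Fin n)}
    (hv : Respects c v) (h : BruhatStep (fun _ => ()) u v) : BruhatStep c u v ∧ Respects c u := by
  obtain ⟨i, j, hij, -, hu, rfl⟩ := h
  obtain ⟨h1, h2⟩ := hv
  have hi : (u * Equiv.swap i j) i = u j := by simp
  have hj : (u * Equiv.swap i j) j = u i := by simp
  have ho : ∀ a, a ≠ i → a ≠ j → (u * Equiv.swap i j) a = u a := fun a ha hb => by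
    simp [Equiv.swap_apply_of_ne_of_ne ha hb]
  have hc : c i = c j := by
    by_contra hne
    exact absurd (h2 i j hij hne) (by rw [hi, hj]; exact hu.asymm)
  refine ⟨⟨i, j, hij, hc, hu, rfl⟩, ?_⟩
  generalize u * Equiv.swap i j = v at *
  -- a position strictly between `i` and `j` has their label, since `v j < v i`
  have hbetween : ∀ a, i < a → a < j → c a = c i := by
    intro a hia haj
    by_contra hne
    have := (h2 i a hia (Ne.symm hne)).trans (h2 a j haj (hc ▸ hne))
    rw [hi, hj] at this
    exact absurd this hu.asymm
  refine ⟨fun a => ?_, fun a b hab hne => ?_⟩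
  · grind
  · grind

lemma Respects.chain {n : ℕ} {α : Type*} {c : Fin n → α} {u v : Equiv.Perm (Fin n)}
    (hv : Respects c v) (h : ReflTransGen (BruhatStep fun _ => ()) u v) :
    ReflTransGen (BruhatStep c) u v ∧ Respects c u := by
  induction h using ReflTransGen.head_induction_on with
  | refl => exact ⟨.refl, hv⟩
  | head hstep _ ih =>
    obtain ⟨h1, h2⟩ := ih.2.step hstep
    exact ⟨.head h1 ih.1, h2⟩

/-! ### Restriction to one label -/

/-- `r` is the restriction of `u` to the positions with label `i`: it agrees with `u` there and
fixes all other positions. -/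
def IsRestriction {n : ℕ} {α : Type*} (c : Fin n → α) (i : α) (u r : Equiv.Perm (Fin n)) : Prop :=
  ∀ a, (c a = i → r a = u a) ∧ (c a ≠ i → r a = a)

lemma exists_isRestriction {n : ℕ} {α : Type*} {c : Fin n → α} {u : Equiv.Perm (Fin n)}
    (hu : ∀ a, c (u a) = c a) (i : α) : ∃ r, IsRestriction c i u r := by
  classical
  have hinj : Function.Injective fun a => if c a = i then u a else a := by
    intro a b hab
    have := hu a
    have := hu b
    have := u.injective.eq_iff (a := a) (b := b)
    grind
  refine ⟨Equiv.ofBijective _ (Finite.injective_iff_bijective.1 hinj), fun a => ?_⟩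
  constructor <;> intro h <;> simp [h]

lemma IsRestriction.unique {n : ℕ} {α : Type*} {c : Fin n → α} {i : α}
    {u r s : Equiv.Perm (Fin n)} (hr : IsRestriction c i u r) (hs : IsRestriction c i u s) :
    r = s := by
  ext1 a
  by_cases h : c a = i
  · rw [(hr a).1 h, (hs a).1 h]
  · rw [(hr a).2 h, (hs a).2 h]

lemma IsRestriction.isInvolution {n : ℕ} {α : Type*} {c : Fin n → α} {i : α}
    {u r : Equiv.Perm (Fin n)} (hu : ∀ a, c (u a) = c a) (h : IsRestriction c i u r)
    (hinv : IsInvolution u) : IsInvolution r := by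
  ext1 a
  have huu : u (u a) = a := by rw [← Equiv.Perm.mul_apply, hinv, Equiv.Perm.one_apply]
  rw [Equiv.Perm.mul_apply, Equiv.Perm.one_apply]
  by_cases ha : c a = i
  · rw [(h a).1 ha, (h _).1 ((hu a).trans ha), huu]
  · rw [(h a).2 ha, (h a).2 ha]

/-- Restriction to the positions with a given label is monotone below a permutation
which respects the labels. -/
lemma Respects.restrict_le {n : ℕ} {α : Type*} {c : Fin n → α} {i : α}
    {u v r s : Equiv.Perm (Fin n)} (hv : Respects c v)
    (h : ReflTransGen (BruhatStep fun _ => ()) u v)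
    (hr : IsRestriction c i u r) (hs : IsRestriction c i v s) :
    ReflTransGen (BruhatStep fun _ => ()) r s := by
  have h' := (hv.chain h).1
  clear h hv
  induction h' using ReflTransGen.head_induction_on generalizing r with
  | refl => rw [hr.unique hs]
  | @head u u' hstep _ ih =>
    obtain ⟨a, b, hab, hc, hlt, rfl⟩ := hstep
    by_cases ha : c a = i
    · have hb : c b = i := hc ▸ ha
      refine .head ⟨a, b, hab, rfl, ?_, rfl⟩ (ih (r := r * Equiv.swap a b) fun x => ?_)
      · rwa [(hr a).1 ha, (hr b).1 hb]
      · rw [Equiv.Perm.mul_apply, Equiv.Perm.mul_apply]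
        have hx : c (Equiv.swap a b x) = c x := by
          rw [Equiv.swap_apply_def]; grind
        refine ⟨fun h => (hr _).1 (hx.trans h), fun h => ?_⟩
        rw [(hr _).2 (hx ▸ h), Equiv.swap_apply_of_ne_of_ne] <;> grind
    · refine ih fun x => ⟨fun h => ?_, (hr x).2⟩
      rw [Equiv.Perm.mul_apply, Equiv.swap_apply_of_ne_of_ne, (hr x).1 h] <;> grind

/-- The labelling which agrees with `c` on the label `i` only, and separates all positions with
other labels. -/
def isolate {n : ℕ} {α : Type*} [DecidableEq α] (c : Fin n → α) (i : α) (a : Fin n) :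
    Option (Fin n) :=
  if c a = i then none else some a

lemma isolate_eq_isolate {n : ℕ} {α : Type*} [DecidableEq α] {c : Fin n → α} {i : α}
    {a b : Fin n} : isolate c i a = isolate c i b ↔ a = b ∨ c a = i ∧ c b = i := by
  unfold isolate
  grind

/-- Since `w` does not invert positions with different labels, `w a ∈ C i` lies on the same side
as `a` of every position outside `C i`, for `w` an involution. -/
lemma IsRestriction.respects_isolate {n : ℕ} {α : Type*} [DecidableEq α] {c : Fin n → α} {i : α}
    {w r : Equiv.Perm (Fin n)} (hr : IsRestriction c i w r) (hw : Respects c w)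
    (hinv : ∀ a, w (w a) = a) : Respects (isolate c i) r := by
  obtain ⟨h1, h2⟩ := hw
  refine ⟨fun a => ?_, fun a b hab hne => ?_⟩
  · rw [isolate_eq_isolate]
    by_cases ha : c a = i
    · rw [(hr a).1 ha, h1]
      exact .inr ⟨ha, ha⟩
    · exact .inl ((hr a).2 ha)
  · rw [Ne, isolate_eq_isolate, not_or] at hne
    by_cases ha : c a = i
    · have hb : c b ≠ i := fun hb => hne.2 ⟨ha, hb⟩
      rw [(hr a).1 ha, (hr b).2 hb]
      by_contra hlt
      have hwab : w a ≠ b := fun h => hb (by rw [← h, h1, ha])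
      have e1 := h2 a b hab (by rw [ha]; exact hb.symm)
      have e2 := h2 b (w a) (lt_of_le_of_ne (not_lt.1 hlt) hwab.symm) (by rw [h1, ha]; exact hb)
      rw [hinv] at e2
      exact absurd (e1.trans e2) (not_lt.2 (hab.le.trans (not_lt.1 hlt)))
    · by_cases hb : c b = i
      · rw [(hr a).2 ha, (hr b).1 hb]
        by_contra hlt
        have hwab : w b ≠ a := fun h => ha (by rw [← h, h1, hb])
        have e1 := h2 a b hab (by rw [hb]; exact ha)
        have e2 := h2 (w b) a (lt_of_le_of_ne (not_lt.1 hlt) hwab) (by rw [h1, hb]; exact ha ∘ .symm)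
        rw [hinv] at e2
        exact absurd (e2.trans e1) (not_lt.2 ((not_lt.1 hlt).trans hab.le))
      · rwa [(hr a).2 ha, (hr b).2 hb]

/-! ### Gluing chains -/

/-- A chain of transpositions inside the positions labelled `i` can be performed on any permutation
which agrees there with the first element of the chain. -/
lemma exists_le_of_component_chain {n : ℕ} {α : Type*} [DecidableEq α] {c : Fin n → α} {i : α}
    {x y : Equiv.Perm (Fin n)} (h : ReflTransGen (BruhatStep (isolate c i)) x y)
    (u : Equiv.Perm (Fin n)) (hu : ∀ a, c a = i → u a = x a) :
    ∃ v, ReflTransGen (BruhatStep fun _ => ()) u v ∧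
      ∀ a, v a = if c a = i then y a else u a := by
  induction h with
  | refl => exact ⟨u, .refl, fun a => by split_ifs with ha <;> simp [*]⟩
  | @tail y z _ hstep ih =>
    obtain ⟨v, huv, hv⟩ := ih
    obtain ⟨a, b, hab, hc, hlt, rfl⟩ := hstep
    obtain ⟨ha, hb⟩ := (isolate_eq_isolate.1 hc).resolve_left hab.ne
    refine ⟨v * Equiv.swap a b, huv.tail ⟨a, b, hab, rfl, ?_, rfl⟩, fun x => ?_⟩
    · rwa [hv, hv, if_pos ha, if_pos hb]
    · rw [Equiv.Perm.mul_apply, Equiv.Perm.mul_apply, hv, Equiv.swap_apply_def]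
      grind

/-- If `u` and `v` are glued from the families `F` and `G`, and every `G i` is reached from `F i`
by upward steps inside the positions labelled `i`, then `u ≤ v`. -/
lemma le_of_component_chains {n k : ℕ} {c : Fin n → Fin k} {F G : Fin k → Equiv.Perm (Fin n)}
    (h : ∀ i, ReflTransGen (BruhatStep (isolate c i)) (F i) (G i))
    {u v : Equiv.Perm (Fin n)} (hu : ∀ a, u a = F (c a) a) (hv : ∀ a, v a = G (c a) a) :
    ReflTransGen (BruhatStep fun _ => ()) u v := by
  have main : ∀ s : Finset (Fin k), ∃ v', ReflTransGen (BruhatStep fun _ => ()) u v' ∧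
      ∀ a, v' a = if c a ∈ s then G (c a) a else u a := by
    intro s
    induction s using Finset.induction_on with
    | empty => exact ⟨u, .refl, by simp⟩
    | insert i s hi ih =>
      obtain ⟨v₁, hle₁, hv₁⟩ := ih
      obtain ⟨v₂, hle₂, hv₂⟩ := exists_le_of_component_chain (h i) v₁ fun a ha => by
        rw [hv₁, ha, if_neg hi, hu, ha]
      refine ⟨v₂, hle₁.trans hle₂, fun a => ?_⟩
      rw [hv₂, hv₁]
      by_cases ha : c a = i
      · simp [ha]
      · simp [ha, Finset.mem_insert]
  obtain ⟨v', hle, hv'⟩ := main Finset.univ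
  have : v' = v := by
    ext1 a
    rw [hv', hv, if_pos (Finset.mem_univ _)]
  exact this ▸ hle

/-! ### Connected components -/

lemma connected_symm {n : ℕ} {w : Equiv.Perm (Fin n)} {a b : Fin n} (h : Connected w a b) :
    Connected w b a := by
  refine ReflTransGen.mono (fun x y hxy => ?_) _ _ h.swap
  unfold Function.swap CrossStep at *
  rw [← neg_sub, Int.sign_neg, hxy, ← Int.sign_neg, neg_sub, ← Int.sign_neg, neg_sub]

lemma crossStep_of_inversion {n : ℕ} {w : Equiv.Perm (Fin n)} {a b : Fin n} (hab : a < b)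
    (h : w b < w a) : CrossStep w a b := by
  unfold CrossStep
  rw [Int.sign_eq_neg_one_of_neg (by rw [Fin.lt_def] at hab; omega),
    Int.sign_eq_one_of_pos (by rw [Fin.lt_def] at h; omega)]

/-- Let `w ∈ I(Sₙ)` be an involution with connected components `C 0, …, C (k-1)`
(the equivalence classes of the connectedness relation), and for each `i` let
`wr i` be the restriction of `w` to `C i` (agreeing with `w` on `C i` and with the
identity elsewhere).  Then the principal order ideal `B(w)` in the Bruhat order on
involutions is isomorphic, as a poset, to the direct product
`B(wr 0) × ⋯ × B(wr (k-1))`. -/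
theorem ideal_iso_prod_of_components {n k : ℕ} (w : Equiv.Perm (Fin n))
    (hw : IsInvolution w)
    (C : Fin k → Set (Fin n)) (hinj : Function.Injective C)
    (hC : ∀ c : Set (Fin n), (∃ i, C i = c) ↔ ∃ a : Fin n, c = {b | Connected w a b})
    (wr : Fin k → Equiv.Perm (Fin n))
    (hwr : ∀ (i : Fin k) (a : Fin n), (a ∈ C i → wr i a = w a) ∧ (a ∉ C i → wr i a = a)) :
    ∃ f : {u : Equiv.Perm (Fin n) // IsInvolution u ∧ BruhatLE u w} ≃
        (∀ i : Fin k, {u : Equiv.Perm (Fin n) // IsInvolution u ∧ BruhatLE u (wr i)}),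
      ∀ a b, BruhatLE a.1 b.1 ↔ ∀ i, BruhatLE ((f a) i).1 ((f b) i).1 := by
  have hww : ∀ a, w (w a) = a := fun a => by
    rw [← Equiv.Perm.mul_apply, hw, Equiv.Perm.one_apply]
  -- `c a` is the index of the component of `a`
  choose c hc using fun a : Fin n => (hC {b | Connected w a b}).2 ⟨a, rfl⟩
  have hCc : ∀ i a, a ∈ C i ↔ c a = i := by
    intro i a
    constructor
    · intro ha
      obtain ⟨x, hx⟩ := (hC (C i)).1 ⟨i, rfl⟩
      rw [hx] at ha
      refine hinj ?_
      rw [hc, hx]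
      ext b
      exact ⟨fun hb => ReflTransGen.trans ha hb, fun hb => ReflTransGen.trans (connected_symm ha) hb⟩
    · rintro rfl
      rw [hc]
      exact ReflTransGen.refl
  have hstep : ∀ a b, CrossStep w a b → c b = c a := by
    intro a b h
    rw [← hCc, hc]
    exact ReflTransGen.single h
  have hresp : Respects c w := by
    refine ⟨fun a => ?_, fun a b hab hne => ?_⟩
    · rcases lt_trichotomy a (w a) with h | h | h
      · exact hstep _ _ (crossStep_of_inversion h (by rwa [hww]))
      · rw [← h]
      · exact (hstep _ _ (crossStep_of_inversion h (by rwa [hww]))).symm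
    · by_contra hlt
      exact hne (hstep a b (crossStep_of_inversion hab
        (lt_of_le_of_ne (not_lt.1 hlt) fun h => hab.ne' (w.injective h)))).symm
  have hwr' : ∀ i, IsRestriction c i w (wr i) := fun i a => by
    simpa only [hCc] using hwr i a
  have hwrr : ∀ i, Respects (isolate c i) (wr i) := fun i =>
    (hwr' i).respects_isolate hresp hww
  have hle : @BruhatLE n = fun u v => ReflTransGen (BruhatStep fun _ => ()) u v :=
    funext₂ fun _ _ => propext bruhatLE_iff
  rw [hle]
  -- `R u i` is the restriction of `u ≤ w` to the component `C i`
  choose R hR using fun (u : {u : Equiv.Perm (Fin n) //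
      IsInvolution u ∧ ReflTransGen (BruhatStep fun _ => ()) u w}) (i : Fin k) =>
    exists_isRestriction (hresp.chain u.2.2).2.1 i
  let f : {u : Equiv.Perm (Fin n) //
      IsInvolution u ∧ ReflTransGen (BruhatStep fun _ => ()) u w} →
      ∀ i : Fin k, {u : Equiv.Perm (Fin n) //
        IsInvolution u ∧ ReflTransGen (BruhatStep fun _ => ()) u (wr i)} :=
    fun u i => ⟨R u i, (hR u i).isInvolution (hresp.chain u.2.2).2.1 u.2.1,
      hresp.restrict_le u.2.2 (hR u i) (hwr' i)⟩
  have hf : ∀ u a, u.1 a = R u (c a) a := fun u a => ((hR u (c a) a).1 rfl).symm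
  have hbij : Function.Bijective f := by
    constructor
    · intro u v huv
      apply Subtype.ext
      ext1 a
      rw [hf, hf]
      exact congrArg (fun r : Equiv.Perm (Fin n) => r a) (congrArg Subtype.val (congrFun huv (c a)))
    · intro F
      have hF : ∀ i, Respects (isolate c i) (F i).1 := fun i => ((hwrr i).chain (F i).2.2).2
      have hFc : ∀ i a, c a = i → c ((F i).1 a) = i := by
        intro i a ha
        rcases isolate_eq_isolate.1 ((hF i).1 a) with h | h
        · rw [h, ha]
        · exact h.1
      have hFo : ∀ i a, c a ≠ i → (F i).1 a = a := fun i a ha =>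
        (isolate_eq_isolate.1 ((hF i).1 a)).resolve_right fun h => ha h.2
      have hginj : Function.Injective fun a => (F (c a)).1 a := by
        intro a b hab
        dsimp only at hab
        have h : c a = c b := by rw [← hFc _ a rfl, hab, hFc _ b rfl]
        rw [h] at hab
        exact (F (c b)).1.injective hab
      -- the preimage of `F` acts on every component `C i` as `F i` does
      let g : Equiv.Perm (Fin n) :=
        Equiv.ofBijective _ (Finite.injective_iff_bijective.1 hginj)
      have hg : ∀ a, g a = (F (c a)).1 a := fun a => rfl
      have hginv : IsInvolution g := by
        ext1 a
        rw [Equiv.Perm.mul_apply, hg (g a), hg a, hFc _ a rfl, ← Equiv.Perm.mul_apply,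
          (F (c a)).2.1]
      have hgw : ReflTransGen (BruhatStep fun _ => ()) g w :=
        le_of_component_chains (fun i => ((hwrr i).chain (F i).2.2).1) hg
          fun a => ((hwr' (c a) a).1 rfl).symm
      refine ⟨⟨g, hginv, hgw⟩, funext fun i => Subtype.ext ?_⟩
      refine (hR ⟨g, hginv, hgw⟩ i).unique fun a => ⟨?_, hFo i a⟩
      rintro rfl
      exact (hg a).symm
  refine ⟨Equiv.ofBijective f hbij, fun u v => ⟨fun h i => ?_, fun h => ?_⟩⟩
  · exact (hresp.chain v.2.2).2.restrict_le h (hR u i) (hR v i)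
  · refine le_of_component_chains (fun i => ?_) (hf u) (hf v)
    exact (((hwrr i).chain (f v i).2.2).2.chain (h i)).1
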